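/- Let H be a Hopf algebra over K and (V, μ) an algebra in the category of left H-Yetter-Drinfeld modules. Then the map P_L : V # H → V # H defined by P_L(v # h) = ∑ S(v₍₋₁₎h₍₂₎)·v₍₀₎ # S(v₍₋₂₎h₍₁₎)h₍₃₎ (where ∑ v₍₋₂₎ ⊗ v₍₋₁₎ ⊗ v₍₀₎ denotes the iterated coaction and ∑ h₍₁₎ ⊗ h₍₂₎ ⊗ h₍₃₎ the iterated comultiplication) is an idempotent Rota-Baxter operator of weight -1 on the smash product algebra V # H. -/

import Mathlib

/-!
STATEMENT 14: For an algebra `(V, μ)` in the category of left `H`-Yetter-Drinfeld modules,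
the map `P_L(v # h) = ∑ S(v₍₋₁₎h₍₂₎)·v₍₀₎ # S(v₍₋₂₎h₍₁₎)h₍₃₎` is an idempotent
Rota-Baxter operator of weight `-1` on the smash product algebra `V # H`.
Here `P_L` is built Sweedler-free from the iterated coaction
`v ↦ ∑ v₍₋₂₎ ⊗ v₍₋₁₎ ⊗ v₍₀₎` and the iterated comultiplication
`h ↦ ∑ h₍₁₎ ⊗ h₍₂₎ ⊗ h₍₃₎`.
-/

open TensorProduct Coalgebra HopfAlgebra LinearMap

/-- The smash product multiplication on `V ⊗ H` associated to a left `H`-action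
`act : H ⊗ V →ₗ V`:  `(v # h)(v' # h') = ∑ v(h₍₁₎·v') # h₍₂₎h'`. -/
noncomputable def smashMul (K : Type*) [Field K]
    (H : Type*) [Ring H] [HopfAlgebra K H]
    (V : Type*) [NonUnitalRing V] [Module K V]
    [SMulCommClass K V V] [IsScalarTower K V V]
    (act : H ⊗[K] V →ₗ[K] V) :
    (V ⊗[K] H) ⊗[K] (V ⊗[K] H) →ₗ[K] V ⊗[K] H :=
  (LinearMap.rTensor H (LinearMap.mul' K V)) ∘ₗ
  (TensorProduct.assoc K V V H).symm.toLinearMap ∘ₗ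
  (LinearMap.lTensor V (TensorProduct.map act (LinearMap.mul' K H))) ∘ₗ
  (LinearMap.lTensor V (TensorProduct.tensorTensorTensorComm K H H V H).toLinearMap) ∘ₗ
  (TensorProduct.assoc K V (H ⊗[K] H) (V ⊗[K] H)).toLinearMap ∘ₗ
  (LinearMap.rTensor (V ⊗[K] H) (LinearMap.lTensor V (Coalgebra.comul (R := K) (A := H))))

/-!
Write `x ↦ ∑ x₍₋₁₎ ⊗ x₍₀₎` for the codiagonal coaction of `H` on `A = V # H`. With left
multiplication by `1 # h` as action, `A` is a left Hopf module over `H`: this is where the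
Yetter-Drinfeld condition enters. Its multiplication is colinear and commutes with the action on
the left factor. Since `S` reverses comultiplication, `P_L` is the projection
`P(x) = ∑ S(x₍₋₁₎)x₍₀₎` of the Hopf module `A` onto its coinvariants, hence idempotent. As `S`
also reverses products, `P(xy) = ∑ S(y₍₋₁₎)P(x)y₍₀₎`. Because `P(y)` is coinvariant this gives
`P(xP(y)) = P(x)P(y)`, and idempotence gives `P(P(x)y) = P(xy)`; the last two terms of the
Rota-Baxter identity of weight `-1` then cancel.
-/

section TensorBilinear

variable {K : Type*} [CommSemiring K]

lemma map₂_map₂_of_assoc {A₁ B₁ C₁ D₁ E₁ F₁ A₂ B₂ C₂ D₂ E₂ F₂ : Type*}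
    [AddCommMonoid A₁] [AddCommMonoid B₁] [AddCommMonoid C₁] [AddCommMonoid D₁]
    [AddCommMonoid E₁] [AddCommMonoid F₁] [AddCommMonoid A₂] [AddCommMonoid B₂]
    [AddCommMonoid C₂] [AddCommMonoid D₂] [AddCommMonoid E₂] [AddCommMonoid F₂]
    [Module K A₁] [Module K B₁] [Module K C₁] [Module K D₁] [Module K E₁] [Module K F₁]
    [Module K A₂] [Module K B₂] [Module K C₂] [Module K D₂] [Module K E₂] [Module K F₂]
    {f₁ : A₁ →ₗ[K] D₁ →ₗ[K] F₁} {g₁ : B₁ →ₗ[K] C₁ →ₗ[K] D₁}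
    {f₁' : E₁ →ₗ[K] C₁ →ₗ[K] F₁} {g₁' : A₁ →ₗ[K] B₁ →ₗ[K] E₁}
    {f₂ : A₂ →ₗ[K] D₂ →ₗ[K] F₂} {g₂ : B₂ →ₗ[K] C₂ →ₗ[K] D₂}
    {f₂' : E₂ →ₗ[K] C₂ →ₗ[K] F₂} {g₂' : A₂ →ₗ[K] B₂ →ₗ[K] E₂}
    (h₁ : ∀ a b c, f₁ a (g₁ b c) = f₁' (g₁' a b) c)
    (h₂ : ∀ a b c, f₂ a (g₂ b c) = f₂' (g₂' a b) c)
    (s : A₁ ⊗[K] A₂) (t : B₁ ⊗[K] B₂) (u : C₁ ⊗[K] C₂) :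
    map₂ f₁ f₂ s (map₂ g₁ g₂ t u) = map₂ f₁' f₂' (map₂ g₁' g₂' s t) u := by
  induction s with
  | zero => simp
  | add s₁ s₂ hs₁ hs₂ => simp only [map_add, LinearMap.add_apply, hs₁, hs₂]
  | tmul a₁ a₂ =>
    induction t with
    | zero => simp
    | add t₁ t₂ ht₁ ht₂ => simp only [map_add, LinearMap.add_apply, ht₁, ht₂]
    | tmul b₁ b₂ =>
      induction u with
      | zero => simp
      | add u₁ u₂ hu₁ hu₂ => simp only [map_add, hu₁, hu₂]
      | tmul c₁ c₂ => simp [h₁, h₂]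

lemma map_lift_tensorTensorTensorComm {M N P Q S T : Type*}
    [AddCommMonoid M] [AddCommMonoid N] [AddCommMonoid P] [AddCommMonoid Q] [AddCommMonoid S]
    [AddCommMonoid T] [Module K M] [Module K N] [Module K P] [Module K Q] [Module K S] [Module K T]
    (f : M →ₗ[K] P →ₗ[K] S) (g : N →ₗ[K] Q →ₗ[K] T) (s : M ⊗[K] N) (t : P ⊗[K] Q) :
    TensorProduct.map (lift f) (lift g)
      (TensorProduct.tensorTensorTensorComm K M N P Q (s ⊗ₜ t)) =
      map₂ f g s t := by
  have : (TensorProduct.mk K _ _).compr₂ (TensorProduct.map (lift f) (lift g) ∘ₗ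
      (TensorProduct.tensorTensorTensorComm K M N P Q).toLinearMap) = map₂ f g := by
    ext; simp
  exact LinearMap.congr_fun₂ this s t

lemma map₂_mul_mul {A B : Type*} [Semiring A] [Semiring B] [Algebra K A] [Algebra K B] :
    map₂ (LinearMap.mul K A) (LinearMap.mul K B) = LinearMap.mul K (A ⊗[K] B) := by
  ext; simp

lemma map₂_apply_right_tmul {M N P Q S T : Type*}
    [AddCommMonoid M] [AddCommMonoid N] [AddCommMonoid P] [AddCommMonoid Q] [AddCommMonoid S]
    [AddCommMonoid T] [Module K M] [Module K N] [Module K P] [Module K Q] [Module K S] [Module K T]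
    (f : M →ₗ[K] P →ₗ[K] S) (g : N →ₗ[K] Q →ₗ[K] T) (t : M ⊗[K] N) (p : P) (q : Q) :
    map₂ f g t (p ⊗ₜ q) = TensorProduct.map (f.flip p) (g.flip q) t := by
  have : (map₂ f g).flip (p ⊗ₜ q) = TensorProduct.map (f.flip p) (g.flip q) := by
    ext; simp
  exact congr($this t)

lemma map₂_mul_tmul {H A : Type*} [Semiring H] [Algebra K H] [AddCommMonoid A] [Module K A]
    (L : H →ₗ[K] A →ₗ[K] A) (t : H ⊗[K] H) (h : H) (a : A) :
    map₂ (LinearMap.mul K H) L t (h ⊗ₜ a) = (L.flip a).lTensor H (t * h ⊗ₜ 1) := by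
  induction t with
  | zero => simp
  | add t₁ t₂ h₁ h₂ => simp only [map_add, add_mul, LinearMap.add_apply, h₁, h₂]
  | tmul p q => simp

end TensorBilinear

section Antipode

open WithConv
open Algebra.TensorProduct (includeLeft includeRight)

variable {K H : Type*} [CommSemiring K] [Semiring H]

lemma comul_eq_includeLeft_convMul_includeRight [Bialgebra K H] :
    toConv (comul (R := K) (A := H)) =
      toConv (includeLeft : H →ₐ[K] H ⊗[K] H).toLinearMap *
        toConv (includeRight : H →ₐ[K] H ⊗[K] H).toLinearMap := by
  ext h
  simp [(ℛ K h).convMul_apply, (ℛ K h).eq]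

variable [HopfAlgebra K H]

lemma antipode_convMul_algHom {A : Type*} [Semiring A] [Algebra K A] (f : H →ₐ[K] A) :
    toConv (f.toLinearMap ∘ₗ antipode K) * toConv f.toLinearMap = 1 := by
  ext h
  have := congr(f $(sum_antipode_mul_eq_algebraMap_counit (ℛ K h)))
  simpa [(ℛ K h).convMul_apply] using this

lemma comul_comp_antipode_eq_convMul :
    toConv (comul ∘ₗ antipode K (A := H)) =
      toConv ((includeRight : H →ₐ[K] H ⊗[K] H).toLinearMap ∘ₗ antipode K) *
        toConv ((includeLeft : H →ₐ[K] H ⊗[K] H).toLinearMap ∘ₗ antipode K) := by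
  refine (left_inv_eq_right_inv (a := toConv (comul (R := K) (A := H))) ?_
    LinearMap.comul_right_inv).symm
  rw [comul_eq_includeLeft_convMul_includeRight, mul_assoc,
    ← mul_assoc (toConv (_ ∘ₗ _)) (toConv includeLeft.toLinearMap), antipode_convMul_algHom,
    one_mul, antipode_convMul_algHom]

lemma comul_antipode (h : H) :
    comul (R := K) (antipode K h) =
      TensorProduct.map (antipode K) (antipode K) (TensorProduct.comm K H H (comul h)) := by
  have key := congr($(comul_comp_antipode_eq_convMul (K := K) (H := H)) h)
  rw [(ℛ K h).convMul_apply] at key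
  conv_rhs => rw [← (ℛ K h).eq]
  simpa using key

lemma comul_comp_antipode_convMul_includeLeft :
    toConv (comul ∘ₗ antipode K (A := H)) * toConv (includeLeft : H →ₐ[K] H ⊗[K] H).toLinearMap =
      toConv ((includeRight : H →ₐ[K] H ⊗[K] H).toLinearMap ∘ₗ antipode K) := by
  rw [comul_comp_antipode_eq_convMul, mul_assoc, antipode_convMul_algHom, mul_one]

end Antipode

section HopfModule

open Algebra.TensorProduct (includeLeft)

variable {K H A : Type*} [CommSemiring K] [AddCommMonoid A] [Module K A]

/-- Left comodules over a coalgebra `H`, given by their coaction. -/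
structure IsCoaction [AddCommMonoid H] [Module K H] [Coalgebra K H] (δ : A →ₗ[K] H ⊗[K] A) :
    Prop where
  coassoc : ∀ x, δ.lTensor H (δ x) = TensorProduct.assoc K H H A (comul.rTensor A (δ x))
  counit : ∀ x, TensorProduct.lid K A (counit.rTensor A (δ x)) = x

/-- Left-left Hopf modules over a bialgebra `H`, given by their action and coaction. -/
structure IsHopfModule [Semiring H] [Bialgebra K H] (L : H →ₐ[K] Module.End K A)
    (δ : A →ₗ[K] H ⊗[K] A) : Prop extends IsCoaction δ where
  map_action : ∀ h x, δ (L h x) = map₂ (LinearMap.mul K H) L.toLinearMap (comul h) (δ x)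

variable [Semiring H] [HopfAlgebra K H] {L : H →ₐ[K] Module.End K A} {δ : A →ₗ[K] H ⊗[K] A}

/-- The projection `x ↦ ∑ S(x₍₋₁₎)x₍₀₎` of a Hopf module onto its coinvariants. -/
noncomputable def coinvariantProj (L : H →ₐ[K] Module.End K A) (δ : A →ₗ[K] H ⊗[K] A) :
    Module.End K A :=
  lift (L.toLinearMap ∘ₗ antipode K) ∘ₗ δ

lemma coinvariantProj_apply (x : A) :
    coinvariantProj L δ x = lift (L.toLinearMap ∘ₗ antipode K) (δ x) := rfl

lemma lift_antipode_map₂_tmul (t : H ⊗[K] H) (h : H) (x : A) :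
    lift (L.toLinearMap ∘ₗ antipode K) (map₂ (LinearMap.mul K H) L.toLinearMap t (h ⊗ₜ x)) =
      L (antipode K h * mul' K H ((antipode K).rTensor H t)) x := by
  induction t with
  | zero => simp
  | add t₁ t₂ h₁ h₂ => simp only [map_add, mul_add, LinearMap.add_apply, h₁, h₂]
  | tmul a b => simp [antipode_mul_antidistrib]

lemma lift_antipode_map₂_mul {m : A →ₗ[K] A →ₗ[K] A} (hL : ∀ h x y, L h (m x y) = m (L h x) y)
    (s t : H ⊗[K] A) :
    lift (L.toLinearMap ∘ₗ antipode K) (map₂ (LinearMap.mul K H) m s t) =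
      lift (L.toLinearMap ∘ₗ antipode K)
        ((m (lift (L.toLinearMap ∘ₗ antipode K) s)).lTensor H t) := by
  induction s with
  | zero => simp
  | add s₁ s₂ h₁ h₂ => simp only [map_add, LinearMap.add_apply, LinearMap.lTensor_add, h₁, h₂]
  | tmul p a =>
    induction t with
    | zero => simp
    | add t₁ t₂ h₁ h₂ => simp only [map_add, h₁, h₂]
    | tmul q b => simp [antipode_mul_antidistrib, hL]

namespace IsHopfModule

lemma coinvariantProj_action (hA : IsHopfModule L δ) (h : H) (x : A) :
    coinvariantProj L δ (L h x) = counit (R := K) h • coinvariantProj L δ x := by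
  rw [coinvariantProj_apply, coinvariantProj_apply, hA.map_action]
  induction δ x with
  | zero => simp
  | add s t hs ht => simp only [map_add, smul_add, hs, ht]
  | tmul p a => simp [lift_antipode_map₂_tmul, Algebra.algebraMap_eq_smul_one]

lemma isIdempotentElem_coinvariantProj (hA : IsHopfModule L δ) :
    IsIdempotentElem (coinvariantProj L δ) := by
  have absorb : coinvariantProj L δ ∘ₗ lift (L.toLinearMap ∘ₗ antipode K) =
      coinvariantProj L δ ∘ₗ (TensorProduct.lid K A).toLinearMap ∘ₗ counit.rTensor A := by
    ext p a
    simp [hA.coinvariantProj_action]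
  ext x
  have := congr($absorb (δ x))
  simpa [hA.counit, ← coinvariantProj_apply] using this

lemma coaction_coinvariantProj (hA : IsHopfModule L δ) (x : A) :
    δ (coinvariantProj L δ x) = 1 ⊗ₜ coinvariantProj L δ x := by
  let Θ : H ⊗[K] (H ⊗[K] A) →ₗ[K] H ⊗[K] A :=
    lift (map₂ (LinearMap.mul K H) L.toLinearMap ∘ₗ comul ∘ₗ antipode K)
  have coaction_lift : δ ∘ₗ lift (L.toLinearMap ∘ₗ antipode K) = Θ ∘ₗ δ.lTensor H := by
    ext p a
    simp [Θ, hA.map_action]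
  have Θ_tmul (t : H ⊗[K] H) (a : A) : Θ (TensorProduct.assoc K H H A (t ⊗ₜ a)) =
      (L.toLinearMap.flip a).lTensor H (mul' K (H ⊗[K] H) (TensorProduct.map (comul ∘ₗ antipode K)
        (includeLeft : H →ₐ[K] H ⊗[K] H).toLinearMap t)) := by
    induction t with
    | zero => simp
    | add t₁ t₂ h₁ h₂ => simp only [map_add, add_tmul, h₁, h₂]
    | tmul b c => simp [Θ, map₂_mul_tmul]
  have Θ_comul : Θ ∘ₗ (TensorProduct.assoc K H H A).toLinearMap ∘ₗ comul.rTensor A =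
      TensorProduct.mk K H A 1 ∘ₗ lift (L.toLinearMap ∘ₗ antipode K) := by
    ext p a
    have := congr($(comul_comp_antipode_convMul_includeLeft (K := K) (H := H)) p)
    rw [LinearMap.convMul_apply] at this
    simp_all
  calc δ (coinvariantProj L δ x) = Θ (δ.lTensor H (δ x)) := congr($coaction_lift (δ x))
    _ = Θ (TensorProduct.assoc K H H A (comul.rTensor A (δ x))) := by rw [hA.coassoc]
    _ = 1 ⊗ₜ coinvariantProj L δ x := congr($Θ_comul (δ x))

end IsHopfModule
end HopfModule

section RotaBaxter

/-- Rota-Baxter operators of weight `c` on a module `A` with bilinear multiplication `m`. -/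
def IsRotaBaxter {K A : Type*} [CommSemiring K] [AddCommMonoid A] [Module K A]
    (m : A →ₗ[K] A →ₗ[K] A) (c : K) (P : A →ₗ[K] A) : Prop :=
  ∀ x y, m (P x) (P y) = P (m x (P y)) + P (m (P x) y) + c • P (m x y)

variable {K H A : Type*} [CommRing K] [Semiring H] [HopfAlgebra K H] [AddCommMonoid A]
  [Module K A] {L : H →ₐ[K] Module.End K A} {δ : A →ₗ[K] H ⊗[K] A} {m : A →ₗ[K] A →ₗ[K] A}

lemma IsHopfModule.isRotaBaxter_coinvariantProj (hA : IsHopfModule L δ)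
    (hL : ∀ h x y, L h (m x y) = m (L h x) y)
    (hδ : ∀ x y, δ (m x y) = map₂ (LinearMap.mul K H) m (δ x) (δ y)) :
    IsRotaBaxter m (-1) (coinvariantProj L δ) := by
  intro x y
  have proj_mul (a b : A) : coinvariantProj L δ (m a b) =
      lift (L.toLinearMap ∘ₗ antipode K) ((m (coinvariantProj L δ a)).lTensor H (δ b)) := by
    rw [coinvariantProj_apply, hδ, lift_antipode_map₂_mul hL, ← coinvariantProj_apply]
  have proj_mul_proj : coinvariantProj L δ (m x (coinvariantProj L δ y)) =
      m (coinvariantProj L δ x) (coinvariantProj L δ y) := by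
    rw [proj_mul, hA.coaction_coinvariantProj]
    simp
  have proj_proj_mul : coinvariantProj L δ (m (coinvariantProj L δ x) y) =
      coinvariantProj L δ (m x y) := by
    rw [proj_mul, proj_mul x, ← Module.End.mul_apply, hA.isIdempotentElem_coinvariantProj]
  have cancel (z : A) : z + (-1 : K) • z = 0 := by
    simpa using (add_smul (1 : K) (-1) z).symm
  rw [proj_mul_proj, proj_proj_mul, add_assoc, cancel, add_zero]

end RotaBaxter

section TensorHopfModule

variable {K H V M : Type*} [CommSemiring K] [Semiring H] [AddCommMonoid V] [Module K V]
  [AddCommMonoid M] [Module K M]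

section Algebra

variable [Algebra K H]

/-- The codiagonal coaction `v ⊗ m ↦ ∑ v₍₋₁₎m₍₋₁₎ ⊗ (v₍₀₎ ⊗ m₍₀₎)` on a tensor product of
comodules. -/
noncomputable def tensorCoaction (ρ : V →ₗ[K] H ⊗[K] V) (σ : M →ₗ[K] H ⊗[K] M) :
    V ⊗[K] M →ₗ[K] H ⊗[K] (V ⊗[K] M) :=
  lift ((map₂ (LinearMap.mul K H) (TensorProduct.mk K V M)).compl₁₂ ρ σ)

/-- Right multiplication `(p ⊗ v) ⊗ h ↦ ph ⊗ v` on the first leg of `H ⊗ V`. -/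
noncomputable def mulRightFst (K H V : Type*) [CommSemiring K] [Semiring H] [Algebra K H]
    [AddCommMonoid V] [Module K V] : (H ⊗[K] V) ⊗[K] H →ₗ[K] H ⊗[K] V :=
  (mul' K H).rTensor V ∘ₗ (TensorProduct.rightComm K H V H).toLinearMap

/-- The map `(p ⊗ v) ⊗ c ↦ ∑ pqᵢ ⊗ (v ⊗ c·xᵢ)` for `u = ∑ qᵢ ⊗ xᵢ`. -/
noncomputable def mulTensorAction (η : H →ₐ[K] Module.End K M) (u : H ⊗[K] M) :
    (H ⊗[K] V) ⊗[K] H →ₗ[K] H ⊗[K] (V ⊗[K] M) :=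
  lift ((map₂ (LinearMap.mul K H) (TensorProduct.mk K V M)).compl₂
    ((LinearMap.lTensorHom H).flip u ∘ₗ η.toLinearMap))

variable {ρ : V →ₗ[K] H ⊗[K] V} {σ : M →ₗ[K] H ⊗[K] M}

lemma tensorCoaction_tmul (v : V) (x : M) :
    tensorCoaction ρ σ (v ⊗ₜ x) =
      map₂ (LinearMap.mul K H) (TensorProduct.mk K V M) (ρ v) (σ x) := rfl

lemma lTensor_tensorCoaction_map₂_mul_mk (s : H ⊗[K] V) (t : H ⊗[K] M) :
    (tensorCoaction ρ σ).lTensor H (map₂ (LinearMap.mul K H) (TensorProduct.mk K V M) s t) =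
      map₂ (LinearMap.mul K H) (map₂ (LinearMap.mul K H) (TensorProduct.mk K V M))
        (ρ.lTensor H s) (σ.lTensor H t) := by
  induction s with
  | zero => simp
  | add s₁ s₂ h₁ h₂ => simp only [map_add, LinearMap.add_apply, h₁, h₂]
  | tmul p v =>
    induction t with
    | zero => simp
    | add t₁ t₂ h₁ h₂ => simp only [map_add, h₁, h₂]
    | tmul q x => simp [tensorCoaction_tmul]

lemma assoc_mul_tmul (a b : H ⊗[K] H) (v : V) (x : M) :
    TensorProduct.assoc K H H (V ⊗[K] M) ((a * b) ⊗ₜ (v ⊗ₜ x)) =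
      map₂ (LinearMap.mul K H) (map₂ (LinearMap.mul K H) (TensorProduct.mk K V M))
        (TensorProduct.assoc K H H V (a ⊗ₜ v)) (TensorProduct.assoc K H H M (b ⊗ₜ x)) := by
  induction a with
  | zero => simp
  | add a₁ a₂ h₁ h₂ => simp only [map_add, add_tmul, add_mul, LinearMap.add_apply, h₁, h₂]
  | tmul p q =>
    induction b with
    | zero => simp
    | add b₁ b₂ h₁ h₂ => simp only [map_add, add_tmul, mul_add, h₁, h₂]
    | tmul r s => simp

lemma map₂_mul_mk_map_mul (s : H ⊗[K] V) (b : H) (g : Module.End K M) (u : H ⊗[K] M) :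
    map₂ (LinearMap.mul K H) (TensorProduct.mk K V M) s
        (TensorProduct.map (LinearMap.mul K H b) g u) =
      map₂ (LinearMap.mul K H) (TensorProduct.mk K V M)
        (mulRightFst K H V (s ⊗ₜ b)) (g.lTensor H u) := by
  induction s with
  | zero => simp
  | add s₁ s₂ h₁ h₂ => simp only [map_add, add_tmul, LinearMap.add_apply, h₁, h₂]
  | tmul p v =>
    induction u with
    | zero => simp
    | add u₁ u₂ h₁ h₂ => simp only [map_add, h₁, h₂]
    | tmul q x => simp [mulRightFst, mul_assoc]

lemma map_mul_map_map₂_mul_mk (a : H) (f : Module.End K V) (g : Module.End K M) (s : H ⊗[K] V)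
    (u : H ⊗[K] M) :
    TensorProduct.map (LinearMap.mul K H a) (TensorProduct.map f g)
        (map₂ (LinearMap.mul K H) (TensorProduct.mk K V M) s u) =
      map₂ (LinearMap.mul K H) (TensorProduct.mk K V M)
        (TensorProduct.map (LinearMap.mul K H a) f s) (g.lTensor H u) := by
  induction s with
  | zero => simp
  | add s₁ s₂ h₁ h₂ => simp only [map_add, LinearMap.add_apply, h₁, h₂]
  | tmul p v =>
    induction u with
    | zero => simp
    | add u₁ u₂ h₁ h₂ => simp only [map_add, h₁, h₂]
    | tmul q x => simp [mul_assoc]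

end Algebra

variable [Bialgebra K H]

/-- The diagonal action `h · (v ⊗ m) = ∑ h₍₁₎·v ⊗ h₍₂₎·m` on a tensor product of modules. -/
noncomputable def tensorAction (θ : H →ₐ[K] Module.End K V) (η : H →ₐ[K] Module.End K M) :
    H →ₐ[K] Module.End K (V ⊗[K] M) :=
  Module.endTensorEndAlgHom.comp
    ((Algebra.TensorProduct.map θ η).comp (Bialgebra.comulAlgHom K H))

/-- The compatibility `∑ h₍₁₎v₍₋₁₎ ⊗ h₍₂₎·v₍₀₎ = ∑ (h₍₁₎·v)₍₋₁₎h₍₂₎ ⊗ (h₍₁₎·v)₍₀₎` between an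
action `θ` and a coaction `ρ` in a left-left Yetter-Drinfeld module. -/
def IsYetterDrinfeld (θ : H →ₐ[K] Module.End K V) (ρ : V →ₗ[K] H ⊗[K] V) : Prop :=
  ∀ h v, map₂ (LinearMap.mul K H) θ.toLinearMap (comul h) (ρ v) =
    mulRightFst K H V ((ρ ∘ₗ θ.toLinearMap.flip v).rTensor H (comul h))

variable {θ : H →ₐ[K] Module.End K V} {η : H →ₐ[K] Module.End K M} {ρ : V →ₗ[K] H ⊗[K] V}
  {σ : M →ₗ[K] H ⊗[K] M}

lemma tensorAction_apply (h : H) :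
    tensorAction θ η h = map₂ θ.toLinearMap η.toLinearMap (comul h) := rfl

lemma tensorAction_tmul (h : H) (v : V) (x : M) :
    tensorAction θ η h (v ⊗ₜ x) =
      TensorProduct.map (θ.toLinearMap.flip v) (η.toLinearMap.flip x) (comul h) := by
  rw [tensorAction_apply, map₂_apply_right_tmul]

lemma counit_rTensor_map₂_mul_mk (s : H ⊗[K] V) (t : H ⊗[K] M) :
    TensorProduct.lid K (V ⊗[K] M) (counit.rTensor (V ⊗[K] M)
      (map₂ (LinearMap.mul K H) (TensorProduct.mk K V M) s t)) =
      TensorProduct.lid K V (counit.rTensor V s) ⊗ₜ TensorProduct.lid K M (counit.rTensor M t) := by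
  induction s with
  | zero => simp
  | add s₁ s₂ h₁ h₂ => simp only [map_add, add_tmul, LinearMap.add_apply, h₁, h₂]
  | tmul p v =>
    induction t with
    | zero => simp
    | add t₁ t₂ h₁ h₂ => simp only [map_add, tmul_add, h₁, h₂]
    | tmul q x => simp [TensorProduct.smul_tmul, TensorProduct.tmul_smul, smul_smul, mul_comm]

lemma assoc_comul_rTensor_map₂_mul_mk (s : H ⊗[K] V) (t : H ⊗[K] M) :
    TensorProduct.assoc K H H (V ⊗[K] M) (comul.rTensor (V ⊗[K] M)
      (map₂ (LinearMap.mul K H) (TensorProduct.mk K V M) s t)) =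
      map₂ (LinearMap.mul K H) (map₂ (LinearMap.mul K H) (TensorProduct.mk K V M))
        (TensorProduct.assoc K H H V (comul.rTensor V s))
        (TensorProduct.assoc K H H M (comul.rTensor M t)) := by
  induction s with
  | zero => simp
  | add s₁ s₂ h₁ h₂ => simp only [map_add, LinearMap.add_apply, h₁, h₂]
  | tmul p v =>
    induction t with
    | zero => simp
    | add t₁ t₂ h₁ h₂ => simp only [map_add, h₁, h₂]
    | tmul q x => simp [assoc_mul_tmul]

lemma IsCoaction.tensor (hρ : IsCoaction ρ) (hσ : IsCoaction σ) :
    IsCoaction (tensorCoaction ρ σ) where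
  coassoc x := by
    induction x with
    | zero => simp
    | add x y hx hy => simp only [map_add, hx, hy]
    | tmul v x =>
      rw [tensorCoaction_tmul, lTensor_tensorCoaction_map₂_mul_mk,
        assoc_comul_rTensor_map₂_mul_mk, hρ.coassoc, hσ.coassoc]
  counit x := by
    induction x with
    | zero => simp
    | add x y hx hy => simp only [map_add, hx, hy]
    | tmul v x =>
      rw [tensorCoaction_tmul, counit_rTensor_map₂_mul_mk, hρ.counit, hσ.counit]

lemma isHopfModule_lmul_comul : IsHopfModule (Algebra.lmul K H) (comul (R := K) (A := H)) where
  coassoc x := by simp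
  counit x := by simp
  map_action h x := by
    change comul (h * x) = map₂ (LinearMap.mul K H) (LinearMap.mul K H) (comul h) (comul x)
    rw [map₂_mul_mul, Bialgebra.comul_mul, LinearMap.mul_apply']

lemma IsHopfModule.tensorCoaction_map_flip (hσ : IsHopfModule η σ) (v : V) (x : M)
    (t : H ⊗[K] H) :
    tensorCoaction ρ σ (TensorProduct.map (θ.toLinearMap.flip v) (η.toLinearMap.flip x) t) =
      mulTensorAction η (σ x)
        ((mulRightFst K H V ∘ₗ (ρ ∘ₗ θ.toLinearMap.flip v).rTensor H).rTensor H
          ((TensorProduct.assoc K H H H).symm (comul.lTensor H t))) := by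
  induction t with
  | zero => simp
  | add t₁ t₂ h₁ h₂ => simp only [map_add, h₁, h₂]
  | tmul a b =>
    rw [TensorProduct.map_tmul, tensorCoaction_tmul, LinearMap.flip_apply η.toLinearMap,
      AlgHom.toLinearMap_apply, hσ.map_action, lTensor_tmul]
    induction (comul (R := K) b) with
    | zero => simp
    | add u₁ u₂ h₁ h₂ => simp only [map_add, tmul_add, LinearMap.add_apply, h₁, h₂]
    | tmul c d => simp [mulTensorAction, map₂_mul_mk_map_mul]

lemma map₂_mul_tensorAction (s : H ⊗[K] V) (u : H ⊗[K] M) (t : H ⊗[K] H) :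
    map₂ (LinearMap.mul K H) (tensorAction θ η).toLinearMap t
        (map₂ (LinearMap.mul K H) (TensorProduct.mk K V M) s u) =
      mulTensorAction η u (((map₂ (LinearMap.mul K H) θ.toLinearMap).flip s).rTensor H
        ((TensorProduct.assoc K H H H).symm (comul.lTensor H t))) := by
  induction t with
  | zero => simp
  | add t₁ t₂ h₁ h₂ => simp only [map_add, LinearMap.add_apply, h₁, h₂]
  | tmul a b =>
    rw [map₂_apply_tmul, AlgHom.toLinearMap_apply, tensorAction_apply, lTensor_tmul]
    induction (comul (R := K) b) with
    | zero => simp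
    | add u₁ u₂ h₁ h₂ => simp only [map_add, tmul_add, map_add_right, LinearMap.add_apply, h₁, h₂]
    | tmul c d => simp [mulTensorAction, map_mul_map_map₂_mul_mk]

lemma IsHopfModule.tensor (hρ : IsCoaction ρ) (hθ : IsYetterDrinfeld θ ρ)
    (hσ : IsHopfModule η σ) : IsHopfModule (tensorAction θ η) (tensorCoaction ρ σ) where
  toIsCoaction := hρ.tensor hσ.toIsCoaction
  map_action h z := by
    induction z with
    | zero => simp
    | add x y hx hy => simp only [map_add, hx, hy]
    | tmul v x =>
      have yetterDrinfeld : (mulRightFst K H V ∘ₗ (ρ ∘ₗ θ.toLinearMap.flip v).rTensor H) ∘ₗ comul =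
          (map₂ (LinearMap.mul K H) θ.toLinearMap).flip (ρ v) ∘ₗ comul :=
        LinearMap.ext fun a => (hθ a v).symm
      rw [tensorAction_tmul, hσ.tensorCoaction_map_flip, tensorCoaction_tmul,
        map₂_mul_tensorAction, coassoc_symm_apply, ← LinearMap.rTensor_comp_apply,
        ← LinearMap.rTensor_comp_apply, yetterDrinfeld]

end TensorHopfModule

section SmashProduct

variable {K H V M : Type*} [CommSemiring K] [Semiring H] [NonUnitalNonAssocSemiring V]
  [Module K V] [SMulCommClass K V V] [IsScalarTower K V V] [AddCommMonoid M] [Module K M]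

/-- The action `(v # h) · z = v · (h · z)` of the smash product `V # H` on `V ⊗ M`, for an
`H`-module `M`. For `M = H` it is the multiplication of `V # H`. -/
noncomputable def smashAction [Bialgebra K H] (θ : H →ₐ[K] Module.End K V)
    (η : H →ₐ[K] Module.End K M) : V ⊗[K] H →ₗ[K] V ⊗[K] M →ₗ[K] V ⊗[K] M :=
  lift ((LinearMap.mul K (Module.End K (V ⊗[K] M))).compl₁₂
    (rTensorHom M ∘ₗ LinearMap.mul K V) (tensorAction θ η).toLinearMap)

/-- Algebras in the category of left-left Yetter-Drinfeld modules over `H`. The underlying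
multiplication is not required to be associative. -/
structure IsYetterDrinfeldAlgebra [Bialgebra K H] (θ : H →ₐ[K] Module.End K V)
    (ρ : V →ₗ[K] H ⊗[K] V) : Prop extends IsCoaction ρ where
  yetterDrinfeld : IsYetterDrinfeld θ ρ
  action_mul : ∀ h v w,
    θ h (v * w) = mul' K V (map₂ θ.toLinearMap θ.toLinearMap (comul h) (v ⊗ₜ w))
  coaction_mul : ∀ v w, ρ (v * w) = map₂ (LinearMap.mul K H) (LinearMap.mul K V) (ρ v) (ρ w)

section Bialgebra

variable [Bialgebra K H] {θ : H →ₐ[K] Module.End K V} {η : H →ₐ[K] Module.End K M}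
  {ρ : V →ₗ[K] H ⊗[K] V} {σ : M →ₗ[K] H ⊗[K] M}

lemma smashAction_tmul (v : V) (h : H) (z : V ⊗[K] M) :
    smashAction θ η (v ⊗ₜ h) z = (LinearMap.mul K V v).rTensor M (tensorAction θ η h z) := rfl

lemma smashAction_tensorAction (x : V ⊗[K] H) (h : H) (z : V ⊗[K] M) :
    smashAction θ η x (tensorAction θ η h z) =
      smashAction θ η (((LinearMap.mul K H).flip h).lTensor V x) z := by
  induction x with
  | zero => simp
  | add x y hx hy => simp only [map_add, LinearMap.add_apply, hx, hy]
  | tmul v k => simp [smashAction_tmul]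

namespace IsYetterDrinfeldAlgebra

lemma tensorAction_rTensor_mul (hV : IsYetterDrinfeldAlgebra θ ρ) (h : H) (v : V)
    (z : V ⊗[K] M) :
    tensorAction θ η h ((LinearMap.mul K V v).rTensor M z) =
      smashAction θ η ((θ.toLinearMap.flip v).rTensor H (comul h)) z := by
  induction z with
  | zero => simp
  | add z₁ z₂ h₁ h₂ => simp only [map_add, h₁, h₂]
  | tmul w x =>
    let Φ : H ⊗[K] (H ⊗[K] H) →ₗ[K] V ⊗[K] M :=
      (mul' K V).rTensor M ∘ₗ (TensorProduct.assoc K V V M).symm.toLinearMap ∘ₗ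
        TensorProduct.map (θ.toLinearMap.flip v)
          (TensorProduct.map (θ.toLinearMap.flip w) (η.toLinearMap.flip x))
    have action_mul (t : H ⊗[K] H) :
        TensorProduct.map (θ.toLinearMap.flip (v * w)) (η.toLinearMap.flip x) t =
          Φ (TensorProduct.assoc K H H H (comul.rTensor H t)) := by
      induction t with
      | zero => simp
      | add t₁ t₂ h₁ h₂ => simp only [map_add, h₁, h₂]
      | tmul a b =>
        rw [TensorProduct.map_tmul, LinearMap.flip_apply, AlgHom.toLinearMap_apply, hV.action_mul,
          rTensor_tmul]
        induction (comul (R := K) a) with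
        | zero => simp
        | add s₁ s₂ h₁ h₂ => simp only [map_add, add_tmul, LinearMap.add_apply, h₁, h₂]
        | tmul c d => simp [Φ]
    have mul_action (t : H ⊗[K] H) :
        smashAction θ η ((θ.toLinearMap.flip v).rTensor H t) (w ⊗ₜ x) = Φ (comul.lTensor H t) := by
      induction t with
      | zero => simp
      | add t₁ t₂ h₁ h₂ => simp only [map_add, LinearMap.add_apply, h₁, h₂]
      | tmul a b =>
        rw [rTensor_tmul, smashAction_tmul, tensorAction_tmul, lTensor_tmul]
        induction (comul (R := K) b) with
        | zero => simp
        | add s₁ s₂ h₁ h₂ => simp only [map_add, tmul_add, h₁, h₂]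
        | tmul c d => simp [Φ]
    rw [rTensor_tmul, LinearMap.mul_apply', tensorAction_tmul, action_mul, coassoc_apply,
      mul_action]

lemma tensorAction_smashAction (hV : IsYetterDrinfeldAlgebra θ ρ) (h : H) (x : V ⊗[K] H)
    (z : V ⊗[K] M) :
    tensorAction θ η h (smashAction θ η x z) =
      smashAction θ η (tensorAction θ (Algebra.lmul K H) h x) z := by
  induction x with
  | zero => simp
  | add x y hx hy => simp only [map_add, LinearMap.add_apply, hx, hy]
  | tmul v k =>
    rw [smashAction_tmul, hV.tensorAction_rTensor_mul, smashAction_tensorAction,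
      ← LinearMap.comp_apply (lTensor _ _), lTensor_comp_rTensor, tensorAction_tmul]
    rfl

lemma tensorCoaction_rTensor_mul (hV : IsYetterDrinfeldAlgebra θ ρ) (v : V) (z : V ⊗[K] M) :
    tensorCoaction ρ σ ((LinearMap.mul K V v).rTensor M z) =
      map₂ (LinearMap.mul K H) (rTensorHom M ∘ₗ LinearMap.mul K V) (ρ v)
        (tensorCoaction ρ σ z) := by
  induction z with
  | zero => simp
  | add z₁ z₂ h₁ h₂ => simp only [map_add, h₁, h₂]
  | tmul w x =>
    rw [rTensor_tmul, LinearMap.mul_apply', tensorCoaction_tmul, tensorCoaction_tmul,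
      hV.coaction_mul]
    exact (map₂_map₂_of_assoc (by simp [mul_assoc]) (by simp) _ _ _).symm

lemma tensorCoaction_smashAction (hV : IsYetterDrinfeldAlgebra θ ρ) (hσ : IsHopfModule η σ)
    (x : V ⊗[K] H) (z : V ⊗[K] M) :
    tensorCoaction ρ σ (smashAction θ η x z) =
      map₂ (LinearMap.mul K H) (smashAction θ η) (tensorCoaction ρ comul x)
        (tensorCoaction ρ σ z) := by
  induction x with
  | zero => simp
  | add x y hx hy => simp only [map_add, LinearMap.add_apply, hx, hy]
  | tmul v h =>
    rw [smashAction_tmul, hV.tensorCoaction_rTensor_mul,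
      (hσ.tensor hV.toIsCoaction hV.yetterDrinfeld).map_action, tensorCoaction_tmul]
    exact map₂_map₂_of_assoc (by simp [mul_assoc]) (by simp [smashAction_tmul]) _ _ _

end IsYetterDrinfeldAlgebra
end Bialgebra
end SmashProduct

section SmashPL

variable {K H V : Type*} [CommSemiring K] [Semiring H] [HopfAlgebra K H] [AddCommMonoid V]
  [Module K V] {θ : H →ₐ[K] Module.End K V} {ρ : V →ₗ[K] H ⊗[K] V}

/-- The map `(a ⊗ b ⊗ v) ⊗ (c ⊗ d ⊗ h) ↦ S(bd)·v ⊗ S(ac)h` from which `P_L` is built. -/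
noncomputable def smashPLKernel (θ : H →ₐ[K] Module.End K V) :
    (H ⊗[K] (H ⊗[K] V)) ⊗[K] (H ⊗[K] (H ⊗[K] H)) →ₗ[K] V ⊗[K] H :=
  (mul' K H).lTensor V ∘ₗ
  (TensorProduct.leftComm K H V H).toLinearMap ∘ₗ
  ((lift θ.toLinearMap).rTensor H ∘ₗ (TensorProduct.assoc K H V H).symm.toLinearMap).lTensor H ∘ₗ
  TensorProduct.map (antipode K ∘ₗ mul' K H)
    ((antipode K ∘ₗ mul' K H).rTensor (V ⊗[K] H)) ∘ₗ
  (TensorProduct.tensorTensorTensorComm K H V H H).toLinearMap.lTensor (H ⊗[K] H) ∘ₗ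
  (TensorProduct.tensorTensorTensorComm K H (H ⊗[K] V) H (H ⊗[K] H)).toLinearMap

/-- The map `P_L(v # h) = ∑ S(v₍₋₁₎h₍₂₎)·v₍₀₎ # S(v₍₋₂₎h₍₁₎)h₍₃₎` on `V # H`. -/
noncomputable def smashPL (θ : H →ₐ[K] Module.End K V) (ρ : V →ₗ[K] H ⊗[K] V) :
    Module.End K (V ⊗[K] H) :=
  smashPLKernel θ ∘ₗ TensorProduct.map (ρ.lTensor H ∘ₗ ρ) (comul.lTensor H ∘ₗ comul)

lemma tensorAction_antipode_mul_tmul (p q : H) (v : V) (h : H) :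
    tensorAction θ (Algebra.lmul K H) (antipode K (p * q)) (v ⊗ₜ h) =
      smashPLKernel θ (TensorProduct.assoc K H H V (comul p ⊗ₜ v) ⊗ₜ
        TensorProduct.assoc K H H H (comul q ⊗ₜ h)) := by
  rw [tensorAction_tmul, comul_antipode, Bialgebra.comul_mul]
  induction (comul (R := K) p) with
  | zero => simp
  | add s₁ s₂ h₁ h₂ => simp only [map_add, add_tmul, add_mul, h₁, h₂]
  | tmul a b =>
    induction (comul (R := K) q) with
    | zero => simp
    | add t₁ t₂ h₁ h₂ => simp only [map_add, add_tmul, tmul_add, mul_add, h₁, h₂]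
    | tmul c d => simp [smashPLKernel]

lemma IsCoaction.smashPL_eq_coinvariantProj (hρ : IsCoaction ρ) :
    smashPL θ ρ = coinvariantProj (tensorAction θ (Algebra.lmul K H)) (tensorCoaction ρ comul) := by
  have lift_eq (s : H ⊗[K] V) (t : H ⊗[K] H) :
      lift ((tensorAction θ (Algebra.lmul K H)).toLinearMap ∘ₗ antipode K)
          (map₂ (LinearMap.mul K H) (TensorProduct.mk K V H) s t) =
        smashPLKernel θ (TensorProduct.assoc K H H V (comul.rTensor V s) ⊗ₜ
          TensorProduct.assoc K H H H (comul.rTensor H t)) := by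
    induction s with
    | zero => simp
    | add s₁ s₂ h₁ h₂ => simp only [map_add, add_tmul, LinearMap.add_apply, h₁, h₂]
    | tmul p v =>
      induction t with
      | zero => simp
      | add t₁ t₂ h₁ h₂ => simp only [map_add, tmul_add, h₁, h₂]
      | tmul q h => simp [tensorAction_antipode_mul_tmul]
  refine TensorProduct.ext' fun v h => ?_
  rw [coinvariantProj_apply, tensorCoaction_tmul, lift_eq, ← hρ.coassoc, coassoc_apply]
  rfl

end SmashPL

theorem smashProduct_PL_isRotaBaxter_weight_neg_one_general {K H V : Type*} [CommRing K]
    [Semiring H] [HopfAlgebra K H] [NonUnitalNonAssocSemiring V] [Module K V]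
    [SMulCommClass K V V] [IsScalarTower K V V] {θ : H →ₐ[K] Module.End K V}
    {ρ : V →ₗ[K] H ⊗[K] V} (hV : IsYetterDrinfeldAlgebra θ ρ) :
    IsIdempotentElem (smashPL θ ρ) ∧
      IsRotaBaxter (smashAction θ (Algebra.lmul K H)) (-1) (smashPL θ ρ) := by
  have hopf := isHopfModule_lmul_comul.tensor hV.toIsCoaction hV.yetterDrinfeld
  rw [hV.toIsCoaction.smashPL_eq_coinvariantProj]
  exact ⟨hopf.isIdempotentElem_coinvariantProj, hopf.isRotaBaxter_coinvariantProj
    hV.tensorAction_smashAction (hV.tensorCoaction_smashAction isHopfModule_lmul_comul)⟩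

section Uncurrying

lemma exists_algHom_lift_eq {K H V : Type*} [CommSemiring K] [Semiring H] [Algebra K H]
    [AddCommMonoid V] [Module K V] (act : H ⊗[K] V →ₗ[K] V)
    (act_one : ∀ v : V, act ((1 : H) ⊗ₜ v) = v)
    (act_mul : ∀ (h h' : H) (v : V), act (h ⊗ₜ act (h' ⊗ₜ v)) = act ((h * h') ⊗ₜ v)) :
    ∃ θ : H →ₐ[K] Module.End K V, lift θ.toLinearMap = act :=
  ⟨AlgHom.ofLinearMap (curry act) (LinearMap.ext act_one)
    fun h h' => LinearMap.ext fun v => (act_mul h h' v).symm, TensorProduct.ext' fun _ _ => rfl⟩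

lemma map_mul'_comm_lTensor_lift {K H V : Type*} [CommSemiring K] [Semiring H] [Algebra K H]
    [AddCommMonoid V] [Module K V] (ρ : V →ₗ[K] H ⊗[K] V) (f : H →ₗ[K] V →ₗ[K] V) (v : V)
    (t : H ⊗[K] H) :
    TensorProduct.map (mul' K H ∘ₗ (TensorProduct.comm K H H).toLinearMap) LinearMap.id
      ((TensorProduct.assoc K H H V).symm ((ρ ∘ₗ lift f).lTensor H (TensorProduct.assoc K H H V
        ((TensorProduct.comm K H H).toLinearMap.rTensor V (t ⊗ₜ v))))) =
      mulRightFst K H V ((ρ ∘ₗ f.flip v).rTensor H t) := by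
  induction t with
  | zero => simp
  | add t₁ t₂ h₁ h₂ => simp only [map_add, add_tmul, h₁, h₂]
  | tmul a b =>
    simp only [rTensor_tmul, LinearEquiv.coe_coe, TensorProduct.comm_tmul,
      TensorProduct.assoc_tmul, lTensor_tmul, LinearMap.comp_apply, lift.tmul,
      LinearMap.flip_apply]
    induction ρ (f a v) with
    | zero => simp
    | add s₁ s₂ h₁ h₂ => simp only [map_add, tmul_add, add_tmul, h₁, h₂]
    | tmul p w => simp [mulRightFst]

lemma smashMul_lift_tmul {K H V : Type*} [Field K] [Ring H] [HopfAlgebra K H] [NonUnitalRing V]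
    [Module K V] [SMulCommClass K V V] [IsScalarTower K V V] (θ : H →ₐ[K] Module.End K V)
    (x y : V ⊗[K] H) :
    smashMul K H V (lift θ.toLinearMap) (x ⊗ₜ y) = smashAction θ (Algebra.lmul K H) x y := by
  induction x with
  | zero => simp
  | add x₁ x₂ h₁ h₂ => simp only [map_add, add_tmul, LinearMap.add_apply, h₁, h₂]
  | tmul v h =>
    have left_mul : (mul' K V).rTensor H ∘ₗ (TensorProduct.assoc K V V H).symm.toLinearMap ∘ₗ
        TensorProduct.mk K V (V ⊗[K] H) v = (LinearMap.mul K V v).rTensor H := by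
      ext; simp
    rw [smashAction_tmul, tensorAction_apply, ← map_lift_tensorTensorTensorComm]
    exact congr($left_mul _)

end Uncurrying

theorem smashProduct_PL_isRotaBaxter_weight_neg_one
    (K : Type*) [Field K] [CharZero K]
    (H : Type*) [Ring H] [HopfAlgebra K H]
    (V : Type*) [NonUnitalRing V] [Module K V]
    [SMulCommClass K V V] [IsScalarTower K V V]
    -- left H-module structure on V
    (act : H ⊗[K] V →ₗ[K] V)
    (act_one : ∀ v : V, act ((1 : H) ⊗ₜ[K] v) = v)
    (act_mul : ∀ (h h' : H) (v : V),
      act (h ⊗ₜ[K] act (h' ⊗ₜ[K] v)) = act ((h * h') ⊗ₜ[K] v))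
    -- left H-comodule structure on V
    (ρ : V →ₗ[K] H ⊗[K] V)
    (coassoc : ∀ v : V,
      (ρ.lTensor H) (ρ v) =
        (TensorProduct.assoc K H H V)
          (((Coalgebra.comul (R := K) (A := H)).rTensor V) (ρ v)))
    (counital : ∀ v : V,
      (TensorProduct.lid K V) (((Coalgebra.counit (R := K) (A := H)).rTensor V) (ρ v)) = v)
    -- Yetter-Drinfeld condition:
    -- ∑ h₍₁₎v₍₋₁₎ ⊗ h₍₂₎·v₍₀₎ = ∑ (h₍₁₎·v)₍₋₁₎h₍₂₎ ⊗ (h₍₁₎·v)₍₀₎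
    (yd : ∀ (h : H) (v : V),
      (TensorProduct.map (LinearMap.mul' K H) act)
        ((TensorProduct.tensorTensorTensorComm K H H H V)
          (Coalgebra.comul h ⊗ₜ[K] ρ v)) =
      (TensorProduct.map
          ((LinearMap.mul' K H) ∘ₗ (TensorProduct.comm K H H).toLinearMap) LinearMap.id)
        ((TensorProduct.assoc K H H V).symm
          ((LinearMap.lTensor H (ρ ∘ₗ act))
            ((TensorProduct.assoc K H H V)
              ((LinearMap.rTensor V (TensorProduct.comm K H H).toLinearMap)
                (Coalgebra.comul h ⊗ₜ[K] v))))))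
    -- module-algebra condition: h·(vv') = ∑ (h₍₁₎·v)(h₍₂₎·v')
    (act_alg : ∀ (h : H) (v v' : V),
      act (h ⊗ₜ[K] (v * v')) =
        (LinearMap.mul' K V)
          ((TensorProduct.map act act)
            ((TensorProduct.tensorTensorTensorComm K H H V V)
              (Coalgebra.comul h ⊗ₜ[K] (v ⊗ₜ[K] v')))))
    -- comodule-algebra condition: ρ(vv') = ∑ v₍₋₁₎v'₍₋₁₎ ⊗ v₍₀₎v'₍₀₎
    (coact_alg : ∀ v v' : V,
      ρ (v * v') =
        (TensorProduct.map (LinearMap.mul' K H) (LinearMap.mul' K V))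
          ((TensorProduct.tensorTensorTensorComm K H V H V) (ρ v ⊗ₜ[K] ρ v')))
    :
    -- P_L(v # h) = ∑ S(v₍₋₁₎h₍₂₎)·v₍₀₎ # S(v₍₋₂₎h₍₁₎)h₍₃₎
    let PL : V ⊗[K] H →ₗ[K] V ⊗[K] H :=
      (LinearMap.lTensor V (LinearMap.mul' K H)) ∘ₗ
      (TensorProduct.leftComm K H V H).toLinearMap ∘ₗ
      (LinearMap.lTensor H
        ((LinearMap.rTensor H act) ∘ₗ (TensorProduct.assoc K H V H).symm.toLinearMap)) ∘ₗ
      (TensorProduct.map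
        (antipode (R := K) (A := H) ∘ₗ LinearMap.mul' K H)
        (LinearMap.rTensor (V ⊗[K] H)
          (antipode (R := K) (A := H) ∘ₗ LinearMap.mul' K H))) ∘ₗ
      (LinearMap.lTensor (H ⊗[K] H)
        (TensorProduct.tensorTensorTensorComm K H V H H).toLinearMap) ∘ₗ
      (TensorProduct.tensorTensorTensorComm K H (H ⊗[K] V) H (H ⊗[K] H)).toLinearMap ∘ₗ
      (TensorProduct.map
        ((LinearMap.lTensor H ρ) ∘ₗ ρ)
        ((LinearMap.lTensor H (Coalgebra.comul (R := K) (A := H))) ∘ₗ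
          Coalgebra.comul))
    (PL ∘ₗ PL = PL) ∧
    (∀ x y : V ⊗[K] H,
      smashMul K H V act (PL x ⊗ₜ[K] PL y) =
        PL (smashMul K H V act (x ⊗ₜ[K] PL y)) +
        PL (smashMul K H V act (PL x ⊗ₜ[K] y)) +
        (-1 : K) • PL (smashMul K H V act (x ⊗ₜ[K] y))) := by
  intro PL
  obtain ⟨θ, rfl⟩ := exists_algHom_lift_eq act act_one act_mul
  have hV : IsYetterDrinfeldAlgebra θ ρ :=
    { coassoc := coassoc
      counit := counital
      yetterDrinfeld := fun h v => by
        rw [← map_mul'_comm_lTensor_lift, ← yd, ← map_lift_tensorTensorTensorComm]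
        rfl
      action_mul := fun h v w => by
        rw [← map_lift_tensorTensorTensorComm]
        exact act_alg h v w
      coaction_mul := fun v w => by
        rw [← map_lift_tensorTensorTensorComm]
        exact coact_alg v w }
  obtain ⟨idem, rotaBaxter⟩ := smashProduct_PL_isRotaBaxter_weight_neg_one_general hV
  refine ⟨idem, fun x y => ?_⟩
  simp only [smashMul_lift_tmul]
  exact rotaBaxter x y
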